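/- Let L be a Lie derivation of I(X,R) (X locally finite) and x < y. Then L(f)(x,y) = L(f|_x^y)(x,y) for all f ∈ I(X,R), where f|_x^y = Σ_{x≤u≤v≤y} f(u,v) e_{uv}. Moreover, if L is a derivation, the equality also holds when x = y. -/

import Mathlib

open Finset

/-- The standard basis element `e_{xy}` of the incidence algebra:
`e_{xy}(u,v) = 1` if `(u,v) = (x,y)` (and `x ≤ y`), and `0` otherwise. -/
def e (R : Type*) [CommRing R] {X : Type*} [Preorder X] [DecidableEq X]
    [DecidableRel (α := X) (· ≤ ·)] (x y : X) : IncidenceAlgebra R X :=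
  ⟨fun u v => if u = x ∧ v = y ∧ x ≤ y then 1 else 0, fun u v huv => by
    simp only [ite_eq_right_iff, and_imp]
    rintro rfl rfl h
    exact absurd h huv⟩

/-- The restriction `f|_x^y = Σ_{x≤u≤v≤y} f(u,v) e_{uv}`. -/
def restrict (R : Type*) [CommRing R] {X : Type*} [Preorder X] [DecidableEq X]
    [DecidableRel (α := X) (· ≤ ·)] [LocallyFiniteOrder X]
    (f : IncidenceAlgebra R X) (x y : X) : IncidenceAlgebra R X :=
  ∑ u ∈ Finset.Icc x y, ∑ v ∈ Finset.Icc x y, f u v • e R u v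

/-!
The elements vanishing on `[x, y]` form a two-sided ideal `I`, and `f - f|_x^y ∈ I`, so it suffices
that `L g x y = 0` for `g ∈ I`. The `(x, y)` entry is the Peirce component `e_x * g * e_y`, where
`e_x = e_{xx}`. If `L` is a derivation, expanding `0 = L (e_x * g * e_y)` by the Leibniz rule leaves
`e_x * L g * e_y` as the only term not visibly in `I`. A Lie derivation only sees commutators; for
`x ≠ y` the double commutator `⁅e_x, ⁅h, e_y⁆⁆ = e_x * h * e_y + e_y * h * e_x` takes the place of
the product, and cutting down by `e_x` and `e_y` again isolates the wanted component.
-/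

section TwoSidedIdeal

lemma lie_mem_of_right_mem {A : Type*} [NonUnitalNonAssocRing A] (I : TwoSidedIdeal A) (a : A)
    {g : A} (hg : g ∈ I) : ⁅a, g⁆ ∈ I :=
  I.sub_mem (I.mul_mem_left a g hg) (I.mul_mem_right g a hg)

lemma lie_mem_of_left_mem {A : Type*} [NonUnitalNonAssocRing A] (I : TwoSidedIdeal A) (a : A)
    {g : A} (hg : g ∈ I) : ⁅g, a⁆ ∈ I :=
  I.sub_mem (I.mul_mem_right g a hg) (I.mul_mem_left a g hg)

variable {A : Type*} [NonUnitalRing A] (I : TwoSidedIdeal A) {p q g : A}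

lemma mul_derivation_mul_mem {D : A → A} (hD : ∀ f g, D (f * g) = D f * g + f * D g)
    (hg : g ∈ I) (hDg : D (p * g * q) ∈ I) : p * D g * q ∈ I := by
  have expand : p * D g * q = D (p * g * q) - (D p * g * q + p * g * D q) := by
    rw [hD, hD]
    noncomm_ring
  rw [expand]
  exact I.sub_mem hDg <| I.add_mem (I.mul_mem_right _ _ (I.mul_mem_left _ _ hg))
    (I.mul_mem_right _ _ (I.mul_mem_left _ _ hg))

lemma lie_lie_eq_add_of_mul_eq_zero (hpq : p * q = 0) (hqp : q * p = 0) (h : A) :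
    ⁅p, ⁅h, q⁆⁆ = p * h * q + q * h * p := by
  calc ⁅p, ⁅h, q⁆⁆ = p * h * q + q * h * p - (p * q) * h - h * (q * p) := by
        simp only [Ring.lie_def]
        noncomm_ring
    _ = p * h * q + q * h * p := by rw [hpq, hqp, zero_mul, mul_zero, sub_zero, sub_zero]

lemma mul_lie_lie_mul_of_isIdempotentElem (hp : IsIdempotentElem p) (hq : IsIdempotentElem q)
    (hpq : p * q = 0) (h : A) : p * ⁅p, ⁅h, q⁆⁆ * q = p * h * q := by
  calc p * ⁅p, ⁅h, q⁆⁆ * q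
      = (p * p) * h * (q * q) - p * (p * q) * h * q - p * h * q * (p * q)
          + (p * q) * h * (p * q) := by
        simp only [Ring.lie_def]
        noncomm_ring
    _ = p * h * q := by
        rw [hp, hq, hpq]
        simp only [mul_zero, zero_mul, sub_zero, add_zero]

lemma mul_lieDerivation_mul_mem {L : A → A} (hL : ∀ f g, L ⁅f, g⁆ = ⁅L f, g⁆ + ⁅f, L g⁆)
    (hp : IsIdempotentElem p) (hq : IsIdempotentElem q) (hpq : p * q = 0) (hg : g ∈ I)
    (hLg : L ⁅p, ⁅g, q⁆⁆ ∈ I) : p * L g * q ∈ I := by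
  have expand : ⁅p, ⁅L g, q⁆⁆ = L ⁅p, ⁅g, q⁆⁆ - (⁅L p, ⁅g, q⁆⁆ + ⁅p, ⁅g, L q⁆⁆) := by
    rw [hL, hL]
    simp only [Ring.lie_def]
    noncomm_ring
  have lie_lie_mem : ⁅p, ⁅L g, q⁆⁆ ∈ I := by
    rw [expand]
    exact I.sub_mem hLg <| I.add_mem (lie_mem_of_right_mem I _ (lie_mem_of_left_mem I _ hg))
      (lie_mem_of_right_mem I _ (lie_mem_of_left_mem I _ hg))
  rw [← mul_lie_lie_mul_of_isIdempotentElem hp hq hpq]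
  exact I.mul_mem_right _ _ (I.mul_mem_left _ _ lie_lie_mem)

end TwoSidedIdeal

section VanishingIdeal

variable (R : Type*) {X : Type*} [Ring R] [Preorder X] [LocallyFiniteOrder X] [DecidableEq X]

/-- The two-sided ideal of the incidence algebra formed by the functions that vanish on all
subintervals of `[x, y]`; modulo it, a function is determined by its restriction to `[x, y]`. -/
def vanishingIdeal (x y : X) : TwoSidedIdeal (IncidenceAlgebra R X) :=
  .mk' {g | ∀ u ∈ Icc x y, ∀ v ∈ Icc x y, g u v = 0}
    (fun _ _ _ _ => rfl)
    (fun hf hg u hu v hv => by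
      rw [IncidenceAlgebra.add_apply, hf u hu v hv, hg u hu v hv, add_zero])
    (fun hf u hu v hv => by rw [IncidenceAlgebra.neg_apply, hf u hu v hv, neg_zero])
    (fun hg u hu v hv => sum_eq_zero fun w hw => by
      rw [hg w (Icc_subset_Icc (mem_Icc.1 hu).1 (mem_Icc.1 hv).2 hw) v hv, mul_zero])
    (fun hf u hu v hv => sum_eq_zero fun w hw => by
      rw [hf u hu w (Icc_subset_Icc (mem_Icc.1 hu).1 (mem_Icc.1 hv).2 hw), zero_mul])

variable {R}

lemma mem_vanishingIdeal {g : IncidenceAlgebra R X} {x y : X} :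
    g ∈ vanishingIdeal R x y ↔ ∀ u ∈ Icc x y, ∀ v ∈ Icc x y, g u v = 0 :=
  TwoSidedIdeal.mem_mk' ..

lemma apply_eq_zero_of_mem_vanishingIdeal {g : IncidenceAlgebra R X} {x y : X} (hxy : x ≤ y)
    (hg : g ∈ vanishingIdeal R x y) : g x y = 0 :=
  mem_vanishingIdeal.1 hg x (left_mem_Icc.2 hxy) y (right_mem_Icc.2 hxy)

lemma apply_swap_eq_zero_of_mem_vanishingIdeal {g : IncidenceAlgebra R X} {x y : X} (hxy : x ≤ y)
    (hg : g ∈ vanishingIdeal R x y) : g y x = 0 :=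
  mem_vanishingIdeal.1 hg y (right_mem_Icc.2 hxy) x (left_mem_Icc.2 hxy)

end VanishingIdeal

lemma incidenceAlgebra_sum_apply {R X ι : Type*} [AddCommMonoid R] [LE X] (s : Finset ι)
    (F : ι → IncidenceAlgebra R X) (u v : X) : (∑ i ∈ s, F i) u v = ∑ i ∈ s, F i u v :=
  map_sum (⟨⟨fun f => f u v, rfl⟩, fun _ _ => rfl⟩ : IncidenceAlgebra R X →+ R) F s

section MatrixUnits

variable {R X : Type*} [CommRing R] [Preorder X] [DecidableEq X]
  [DecidableRel (α := X) (· ≤ ·)]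

lemma e_apply (x y u v : X) : e R x y u v = if u = x ∧ v = y ∧ x ≤ y then 1 else 0 := rfl

variable [LocallyFiniteOrder X]

lemma e_self_mul_apply (h : IncidenceAlgebra R X) (x u v : X) :
    (e R x x * h) u v = if u = x then h u v else 0 := by
  obtain rfl | hux := eq_or_ne u x
  · by_cases huv : u ≤ v
    · simp [e_apply, huv]
    · simp [IncidenceAlgebra.apply_eq_zero_of_not_le huv]
  · simp [e_apply, hux]

lemma mul_e_self_apply (h : IncidenceAlgebra R X) (y u v : X) :
    (h * e R y y) u v = if v = y then h u v else 0 := by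
  obtain rfl | hvy := eq_or_ne v y
  · by_cases huv : u ≤ v
    · simp [e_apply, huv]
    · simp [IncidenceAlgebra.apply_eq_zero_of_not_le huv]
  · simp [e_apply, hvy]

lemma e_self_mul_mul_e_self (h : IncidenceAlgebra R X) (x y : X) :
    e R x x * h * e R y y = h x y • e R x y := by
  ext u v huv
  rw [mul_e_self_apply, e_self_mul_apply, IncidenceAlgebra.constSMul_apply, e_apply]
  split_ifs <;> simp_all

lemma orthogonalIdempotents_e_self : OrthogonalIdempotents fun x : X => e R x x where
  idem x := by simpa [IsIdempotentElem] using e_self_mul_mul_e_self (R := R) 1 x x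
  ortho x y hxy := by simpa [hxy] using e_self_mul_mul_e_self (R := R) 1 x y

lemma apply_eq_zero_of_e_self_mul_mul_e_self_mem {h : IncidenceAlgebra R X} {x y : X} (hxy : x ≤ y)
    (hh : e R x x * h * e R y y ∈ vanishingIdeal R x y) : h x y = 0 := by
  simpa only [mul_e_self_apply, e_self_mul_apply, if_true] using
    apply_eq_zero_of_mem_vanishingIdeal hxy hh

lemma e_self_mul_mul_e_self_eq_zero {h : IncidenceAlgebra R X} {x y : X} (hh : h x y = 0) :
    e R x x * h * e R y y = 0 := by
  rw [e_self_mul_mul_e_self, hh, zero_smul]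

lemma restrict_apply (f : IncidenceAlgebra R X) {x y u v : X} (hu : u ∈ Icc x y)
    (hv : v ∈ Icc x y) : restrict R f x y u v = f u v := by
  by_cases huv : u ≤ v
  · calc restrict R f x y u v
        = ∑ a ∈ Icc x y, ∑ b ∈ Icc x y, f a b * e R a b u v := by
          simp only [_root_.restrict, incidenceAlgebra_sum_apply,
            IncidenceAlgebra.constSMul_apply, smul_eq_mul]
      _ = f u v * e R u v u v := by
          rw [sum_eq_single_of_mem u hu fun a _ hau => sum_eq_zero fun b _ => by
              simp [e_apply, hau.symm],
            sum_eq_single_of_mem v hv fun b _ hbv => by simp [e_apply, hbv.symm]]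
      _ = f u v := by simp [e_apply, huv]
  · simp only [IncidenceAlgebra.apply_eq_zero_of_not_le huv]

lemma sub_restrict_mem_vanishingIdeal (f : IncidenceAlgebra R X) (x y : X) :
    f - restrict R f x y ∈ vanishingIdeal R x y :=
  mem_vanishingIdeal.2 fun u hu v hv => by
    rw [IncidenceAlgebra.sub_apply, restrict_apply f hu hv, sub_self]

end MatrixUnits

section Derivations

variable {R X : Type*} [CommRing R] [Preorder X] [DecidableEq X] [LocallyFiniteOrder X]
  {L : IncidenceAlgebra R X → IncidenceAlgebra R X}
  {g : IncidenceAlgebra R X} {x y : X}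

lemma derivation_apply_eq_zero (hL : ∀ f g, L (f * g) = L f * g + f * L g)
    (hg : g ∈ vanishingIdeal R x y) (hxy : x ≤ y) : L g x y = 0 := by
  classical
  have hL₀ : L 0 = 0 := by simpa only [mul_zero, zero_mul, add_zero] using hL 0 0
  have component : e R x x * g * e R y y = 0 :=
    e_self_mul_mul_e_self_eq_zero (apply_eq_zero_of_mem_vanishingIdeal hxy hg)
  apply apply_eq_zero_of_e_self_mul_mul_e_self_mem hxy
  apply mul_derivation_mul_mem _ hL hg
  rw [component, hL₀]
  exact TwoSidedIdeal.zero_mem _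

lemma lieDerivation_apply_eq_zero (hL : ∀ f g, L ⁅f, g⁆ = ⁅L f, g⁆ + ⁅f, L g⁆)
    (hg : g ∈ vanishingIdeal R x y) (hxy : x ≤ y) (hne : x ≠ y) : L g x y = 0 := by
  classical
  have hL₀ : L 0 = 0 := by
    simpa only [Ring.lie_def, mul_zero, zero_mul, sub_zero, add_zero] using hL 0 0
  have idempotents : OrthogonalIdempotents fun x : X => e R x x := orthogonalIdempotents_e_self
  have component : ⁅e R x x, ⁅g, e R y y⁆⁆ = 0 := by
    rw [lie_lie_eq_add_of_mul_eq_zero (idempotents.ortho hne) (idempotents.ortho hne.symm),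
      e_self_mul_mul_e_self_eq_zero (apply_eq_zero_of_mem_vanishingIdeal hxy hg),
      e_self_mul_mul_e_self_eq_zero (apply_swap_eq_zero_of_mem_vanishingIdeal hxy hg), add_zero]
  apply apply_eq_zero_of_e_self_mul_mul_e_self_mem hxy
  apply mul_lieDerivation_mul_mem _ hL (idempotents.idem x) (idempotents.idem y)
    (idempotents.ortho hne) hg
  rw [component, hL₀]
  exact TwoSidedIdeal.zero_mem _

end Derivations

theorem lieDer_apply_eq_restrict_general {R X : Type*} [CommRing R] [Preorder X]
    [DecidableEq X] [DecidableRel (α := X) (· ≤ ·)] [LocallyFiniteOrder X]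
    (L : IncidenceAlgebra R X →+ IncidenceAlgebra R X) :
    ((∀ f g, L ⁅f, g⁆ = ⁅L f, g⁆ + ⁅f, L g⁆) →
      ∀ (f : IncidenceAlgebra R X) (x y : X), x ≤ y → x ≠ y →
        L f x y = L (restrict R f x y) x y) ∧
    ((∀ f g, L (f * g) = L f * g + f * L g) →
      ∀ (f : IncidenceAlgebra R X) (x y : X), x ≤ y → L f x y = L (restrict R f x y) x y) := by
  have reduce {f : IncidenceAlgebra R X} {x y : X} (h : L (f - restrict R f x y) x y = 0) :
      L f x y = L (restrict R f x y) x y := by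
    rwa [map_sub, IncidenceAlgebra.sub_apply, sub_eq_zero] at h
  refine ⟨fun hL f x y hxy hne => reduce ?_, fun hD f x y hxy => reduce ?_⟩
  · exact lieDerivation_apply_eq_zero hL (sub_restrict_mem_vanishingIdeal f x y) hxy hne
  · exact derivation_apply_eq_zero hD (sub_restrict_mem_vanishingIdeal f x y) hxy

/-- Let `L` be a Lie derivation of `I(X,R)` (`X` locally finite) and `x < y`. Then
`L(f)(x,y) = L(f|_x^y)(x,y)` for all `f ∈ I(X,R)`. Moreover, if `L` is a derivation, the
equality also holds when `x = y`. -/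
theorem lieDer_apply_eq_restrict {R X : Type*} [CommRing R] [Preorder X]
    [DecidableEq X] [DecidableRel (α := X) (· ≤ ·)] [LocallyFiniteOrder X]
    (L : IncidenceAlgebra R X →ₗ[R] IncidenceAlgebra R X)
    (hL : ∀ f g : IncidenceAlgebra R X,
      L (f * g - g * f) = (L f * g - g * L f) + (f * L g - L g * f)) :
    (∀ (f : IncidenceAlgebra R X) (x y : X), x ≤ y → x ≠ y →
        L f x y = L (restrict R f x y) x y) ∧
    ((∀ f g : IncidenceAlgebra R X, L (f * g) = L f * g + f * L g) →
      ∀ (f : IncidenceAlgebra R X) (x : X), L f x x = L (restrict R f x x) x x) := by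
  have general := lieDer_apply_eq_restrict_general L.toAddMonoidHom
  exact ⟨general.1 hL, fun hD f x => general.2 hD f x x le_rfl⟩
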